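/- GRPL embeds in GRPL via grade-1 formulas: for every set T of graded formulas and every graded formula ⟨q, φ⟩, T ⊢_GRPL ⟨q, φ⟩ if and only if { ⟨1, r̄→ψ⟩ : ⟨r, ψ⟩ ∈ T } ⊢_GRPL ⟨1, q̄→φ⟩. Moreover, the proof whose existence is asserted on the right-hand side can be chosen so that every graded formula occurring in it has grade 1. -/

import Mathlib

/-- The rationals in the unit interval: indices of the truth constants of RPL,
and grades of graded formulas of GRPL. -/
abbrev UQ := {q : ℚ // 0 ≤ q ∧ q ≤ 1}

instance : Zero UQ := ⟨⟨0, by norm_num⟩⟩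
instance : One UQ := ⟨⟨1, by norm_num⟩⟩

/-- Łukasiewicz negation on the rational unit interval: `¬q = 1 - q`. -/
def UQ.lneg (q : UQ) : UQ :=
  ⟨1 - q.1, by obtain ⟨h0, h1⟩ := q.2; constructor <;> linarith⟩

/-- Łukasiewicz implication on the rational unit interval: `q → r = min 1 (1 - q + r)`. -/
def UQ.limp (q r : UQ) : UQ :=
  ⟨min 1 (1 - q.1 + r.1), by
    obtain ⟨hq0, hq1⟩ := q.2; obtain ⟨hr0, hr1⟩ := r.2
    exact ⟨le_min (by norm_num) (by linarith), min_le_left _ _⟩⟩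

/-- Łukasiewicz strong conjunction on the rational unit interval:
`q ⊙ r = max 0 (q + r - 1)`. -/
def UQ.lmul (q r : UQ) : UQ :=
  ⟨max 0 (q.1 + r.1 - 1), by
    obtain ⟨hq0, hq1⟩ := q.2; obtain ⟨hr0, hr1⟩ := r.2
    exact ⟨le_max_left _ _, max_le (by norm_num) (by linarith)⟩⟩

/-- Formulas of the language of RPL: propositional variables, a truth constant `q̄` for
each rational `q ∈ [0,1]`, negation and implication. -/
inductive Fml : Type
  | var : ℕ → Fml
  | const : UQ → Fml
  | neg : Fml → Fml
  | imp : Fml → Fml → Fml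

/-- Strong conjunction, defined: `α ⊙ β := ¬(α → ¬β)`. -/
def Fml.odot (a b : Fml) : Fml := Fml.neg (a.imp b.neg)

/-- (Min-)conjunction, defined: `α ∧ β := α ⊙ (α → β)`. -/
def Fml.conj (a b : Fml) : Fml := a.odot (a.imp b)

/-- Equivalence `α ≡ β`, the conjunction of the two implications. -/
def Fml.eqv (a b : Fml) : Fml := (a.imp b).conj (b.imp a)

/-- Instances of the axiom schemata (A1)-(A4) of Łukasiewicz logic Ł. -/
inductive IsLukAxiom : Fml → Prop
  | a1 (φ ψ : Fml) : IsLukAxiom (φ.imp (ψ.imp φ))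
  | a2 (φ ψ χ : Fml) : IsLukAxiom ((φ.imp ψ).imp ((ψ.imp χ).imp (φ.imp χ)))
  | a3 (φ ψ : Fml) : IsLukAxiom (((φ.imp ψ).imp ψ).imp ((ψ.imp φ).imp φ))
  | a4 (φ ψ : Fml) : IsLukAxiom ((φ.neg.imp ψ.neg).imp (ψ.imp φ))

/-- Axioms of Rational Pavelka logic RPL: the axioms of Ł together with the
bookkeeping axioms (with `1̄ ≡ 1` and `0̄ ≡ 0` rendered as the provability of `1̄`
and of `¬0̄`, since the basic language `{¬, →}` has no primitive truth constants). -/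
inductive IsRPLAxiom : Fml → Prop
  | luk {φ : Fml} : IsLukAxiom φ → IsRPLAxiom φ
  | book_imp (q r : UQ) :
      IsRPLAxiom (((Fml.const q).imp (Fml.const r)).eqv (Fml.const (q.limp r)))
  | book_neg (q : UQ) : IsRPLAxiom ((Fml.const q).neg.eqv (Fml.const q.lneg))
  | book_one : IsRPLAxiom (Fml.const 1)
  | book_zero : IsRPLAxiom (Fml.const 0).neg

/-- `L` is a proof in RPL from the theory `T`: every member of the list is an axiom of RPL,
a member of `T`, or follows from two earlier members by modus ponens. -/
def IsRPLProofFrom (T : Set Fml) (L : List Fml) : Prop :=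
  ∀ i : Fin L.length, IsRPLAxiom (L.get i) ∨ L.get i ∈ T ∨
    ∃ j k : Fin L.length, j < i ∧ k < i ∧ L.get k = (L.get j).imp (L.get i)

/-- `T ⊢_RPL φ`: some proof in RPL from `T` has `φ` as its last element. -/
def RPLProv (T : Set Fml) (φ : Fml) : Prop :=
  ∃ L : List Fml, IsRPLProofFrom T L ∧ L.getLast? = some φ

/-- The fuzzy set of axioms of GRPL: (A) instances of the axioms of Ł in grade 1;
(B) each constant `q̄` in grade `q`; (C) the bookkeeping axioms in grade 1;
(D) all formulas in grade 0. -/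
inductive IsGRPLAxiom : UQ → Fml → Prop
  | luk {φ : Fml} : IsLukAxiom φ → IsGRPLAxiom 1 φ
  | const (q : UQ) : IsGRPLAxiom q (Fml.const q)
  | book_neg (q : UQ) : IsGRPLAxiom 1 ((Fml.const q).neg.eqv (Fml.const q.lneg))
  | book_imp (q r : UQ) :
      IsGRPLAxiom 1 (((Fml.const q).imp (Fml.const r)).eqv (Fml.const (q.limp r)))
  | zero (φ : Fml) : IsGRPLAxiom 0 φ

/-- `L` is a graded proof in GRPL from the set `T` of graded formulas: every member is a
graded axiom of GRPL, a member of `T`, or follows from earlier members by graded modus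
ponens (from `⟨q,φ⟩` and `⟨r,φ→ψ⟩` derive `⟨q⊙r,ψ⟩`) or by lifting (from `⟨q,φ⟩` derive
`⟨r→q, r̄→φ⟩`). -/
def IsGRPLProofFrom (T : Set (UQ × Fml)) (L : List (UQ × Fml)) : Prop :=
  ∀ i : Fin L.length, IsGRPLAxiom (L.get i).1 (L.get i).2 ∨ L.get i ∈ T ∨
    (∃ j k : Fin L.length, j < i ∧ k < i ∧
      (L.get k).2 = (L.get j).2.imp (L.get i).2 ∧
      (L.get i).1 = UQ.lmul (L.get j).1 (L.get k).1) ∨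
    (∃ j : Fin L.length, ∃ r : UQ, j < i ∧
      L.get i = (UQ.limp r (L.get j).1, (Fml.const r).imp (L.get j).2))

/-- `T ⊢_GRPL ⟨q,φ⟩`: some graded proof in GRPL from `T` has `⟨q,φ⟩` as its last element. -/
def GRPLProv (T : Set (UQ × Fml)) (p : UQ × Fml) : Prop :=
  ∃ L : List (UQ × Fml), IsGRPLProofFrom T L ∧ L.getLast? = some p

/-- The set of graded hypotheses `⟨Γ(ψ), ψ⟩` determined by a fuzzy theory `Γ`. -/
def FuzzyThy (Γ : Fml → UQ) : Set (UQ × Fml) := {p | p.1 = Γ p.2}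

/-- An assignment into the standard MV-algebra `[0,1]_Ł` takes values in `[0,1]`. -/
def IsAssignment (v : ℕ → ℝ) : Prop := ∀ n, v n ∈ Set.Icc (0 : ℝ) 1

/-- Evaluation of a formula in the standard MV-algebra `[0,1]_Ł`, with each rational
constant interpreted canonically. -/
noncomputable def eval (v : ℕ → ℝ) : Fml → ℝ
  | Fml.var n => v n
  | Fml.const q => (q.1 : ℝ)
  | Fml.neg φ => 1 - eval v φ
  | Fml.imp φ ψ => min 1 (1 - eval v φ + eval v ψ)

/-!
Each of `⟨q, φ⟩` and `⟨1, q̄ → φ⟩` is derivable from the other: the second from the first by lifting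
(as `q → q = 1`), the first from the second by modus ponens with the axiom `⟨q, q̄⟩`. Hence `T` and
its internalization have the same consequences, which is the equivalence. The proofs so obtained
still pass through lower grades. For a proof in grade `1` throughout, replace each line `⟨r, ψ⟩` of
a proof from `T` by `r̄ → ψ`: axioms and rules turn into derivations in Ł with bookkeeping, the
crucial case being graded modus ponens, where residuation turns `q̄ → φ` and `r̄ → (φ → ψ)` into
`q̄ ⊙ r̄ → ψ`, while the constant for `q ⊙ r` implies `q̄ ⊙ r̄` by bookkeeping.
-/

local notation:60 α:61 " ⇒ " β:60 => Fml.imp α β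
local notation:max "∼" α:max => Fml.neg α

namespace UQ

theorem coe_one : ((1 : UQ) : ℚ) = 1 := rfl

theorem lneg_zero : lneg 0 = 1 :=
  Subtype.ext (sub_zero 1)

theorem limp_self (q : UQ) : limp q q = 1 := by
  apply Subtype.ext
  simp [limp, coe_one]

theorem lmul_one (q : UQ) : lmul q 1 = q := by
  apply Subtype.ext
  simp [lmul, coe_one, q.2.1]

theorem lmul_eq_lneg_limp_lneg (q r : UQ) : lmul q r = lneg (limp q (lneg r)) := by
  apply Subtype.ext
  simp only [lmul, lneg, limp]
  grind

end UQ

/-- Derivability of a formula in Łukasiewicz logic Ł from a set `Γ` of formulas. -/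
inductive LukProv (Γ : Set Fml) : Fml → Prop
  | luk {α : Fml} : IsLukAxiom α → LukProv Γ α
  | hyp {α : Fml} : α ∈ Γ → LukProv Γ α
  | mp {α β : Fml} : LukProv Γ α → LukProv Γ (α ⇒ β) → LukProv Γ β

local notation:25 Γ:26 " ⊢Ł " α:26 => LukProv Γ α

namespace LukProv

variable {Γ : Set Fml} {α β γ δ : Fml}

theorem imp_intro (h : Γ ⊢Ł α) : Γ ⊢Ł β ⇒ α :=
  h.mp (luk (.a1 α β))

theorem imp_mono_left (h : Γ ⊢Ł α ⇒ β) : Γ ⊢Ł (β ⇒ γ) ⇒ α ⇒ γ :=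
  h.mp (luk (.a2 α β γ))

theorem imp_trans (h₁ : Γ ⊢Ł α ⇒ β) (h₂ : Γ ⊢Ł β ⇒ γ) : Γ ⊢Ł α ⇒ γ :=
  h₂.mp h₁.imp_mono_left

theorem assertion (α β : Fml) : Γ ⊢Ł α ⇒ (α ⇒ β) ⇒ β :=
  (luk (.a1 α (β ⇒ α))).imp_trans (luk (.a3 β α))

theorem imp_swap (h : Γ ⊢Ł α ⇒ β ⇒ γ) : Γ ⊢Ł β ⇒ α ⇒ γ :=
  (assertion β γ).imp_trans h.imp_mono_left

theorem imp_mono_right (h : Γ ⊢Ł β ⇒ γ) : Γ ⊢Ł (α ⇒ β) ⇒ α ⇒ γ :=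
  h.mp (luk (.a2 α β γ)).imp_swap

theorem imp_refl (α : Fml) : Γ ⊢Ł α ⇒ α :=
  (luk (.a1 α α)).mp (luk (.a1 α (α ⇒ α ⇒ α))).imp_swap

theorem neg_imp_imp (α β : Fml) : Γ ⊢Ł ∼α ⇒ α ⇒ β :=
  (luk (.a1 (∼α) (∼β))).imp_trans (luk (.a4 β α))

theorem neg_neg_imp (α : Fml) : Γ ⊢Ł ∼(∼α) ⇒ α :=
  (imp_refl α).mp ((neg_imp_imp (∼α) (∼(α ⇒ α))).imp_trans (luk (.a4 α (α ⇒ α)))).imp_swap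

theorem imp_neg_neg (α : Fml) : Γ ⊢Ł α ⇒ ∼(∼α) :=
  (neg_neg_imp (∼α)).mp (luk (.a4 (∼(∼α)) α))

theorem contrapositive (α β : Fml) : Γ ⊢Ł (α ⇒ β) ⇒ ∼β ⇒ ∼α :=
  (neg_neg_imp α).imp_mono_left.imp_trans
    ((imp_neg_neg β).imp_mono_right.imp_trans (luk (.a4 (∼α) (∼β))))

theorem neg_imp_neg (h : Γ ⊢Ł α ⇒ β) : Γ ⊢Ł ∼β ⇒ ∼α :=
  h.mp (contrapositive α β)

theorem odot_imp (h : Γ ⊢Ł α ⇒ β ⇒ γ) : Γ ⊢Ł α.odot β ⇒ γ :=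
  have neg_imp : Γ ⊢Ł ∼γ ⇒ α ⇒ ∼β := (h.imp_trans (contrapositive β γ)).imp_swap
  neg_imp.neg_imp_neg.imp_trans (neg_neg_imp γ)

theorem conj_left (h : Γ ⊢Ł α.conj β) : Γ ⊢Ł α :=
  h.mp (odot_imp (luk (.a1 α (α ⇒ β))))

theorem conj_right (h : Γ ⊢Ł α.conj β) : Γ ⊢Ł β :=
  h.mp (odot_imp (assertion α β))

theorem odot_imp_of_imp (h₁ : Γ ⊢Ł α ⇒ γ) (h₂ : Γ ⊢Ł β ⇒ γ ⇒ δ) : Γ ⊢Ł α.odot β ⇒ δ :=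
  odot_imp (h₂.imp_trans h₁.imp_mono_left).imp_swap

end LukProv

/-- The formulas available in grade `1` in GRPL from `T`: axioms of grade `1` and members of `T` of
grade `1`. -/
def gradeOneTheory (T : Set (UQ × Fml)) : Set Fml :=
  {α | IsGRPLAxiom 1 α ∨ (1, α) ∈ T}

section Bookkeeping

variable {T : Set (UQ × Fml)}

theorem lukProv_of_isGRPLAxiom_one {α : Fml} (h : IsGRPLAxiom 1 α) : gradeOneTheory T ⊢Ł α :=
  .hyp (.inl h)

theorem lukProv_neg_const_imp (q : UQ) : gradeOneTheory T ⊢Ł ∼(.const q) ⇒ .const q.lneg :=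
  (lukProv_of_isGRPLAxiom_one (.book_neg q)).conj_left

theorem lukProv_const_lneg_imp (q : UQ) : gradeOneTheory T ⊢Ł .const q.lneg ⇒ ∼(.const q) :=
  (lukProv_of_isGRPLAxiom_one (.book_neg q)).conj_right

theorem lukProv_const_imp_const_imp (q r : UQ) :
    gradeOneTheory T ⊢Ł (.const q ⇒ .const r) ⇒ .const (q.limp r) :=
  (lukProv_of_isGRPLAxiom_one (.book_imp q r)).conj_left

theorem lukProv_const_limp_imp (q r : UQ) :
    gradeOneTheory T ⊢Ł .const (q.limp r) ⇒ .const q ⇒ .const r :=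
  (lukProv_of_isGRPLAxiom_one (.book_imp q r)).conj_right

theorem lukProv_const_lmul_imp (q r : UQ) :
    gradeOneTheory T ⊢Ł .const (q.lmul r) ⇒ (Fml.const q).odot (.const r) := by
  have imp_const : gradeOneTheory T ⊢Ł (.const q ⇒ ∼(.const r)) ⇒ .const (q.limp r.lneg) :=
    (lukProv_neg_const_imp r).imp_mono_right.imp_trans (lukProv_const_imp_const_imp q r.lneg)
  rw [UQ.lmul_eq_lneg_limp_lneg]
  exact (lukProv_const_lneg_imp _).imp_trans imp_const.neg_imp_neg

theorem lukProv_const_zero_imp (α : Fml) : gradeOneTheory T ⊢Ł .const 0 ⇒ α := by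
  have const_lneg_zero : gradeOneTheory T ⊢Ł .const (UQ.lneg 0) :=
    UQ.lneg_zero ▸ lukProv_of_isGRPLAxiom_one (.const 1)
  exact (const_lneg_zero.mp (lukProv_const_lneg_imp 0)).mp (.neg_imp_imp _ α)

theorem lukProv_const_imp_of_isGRPLAxiom {q : UQ} {α : Fml} (h : IsGRPLAxiom q α) :
    gradeOneTheory T ⊢Ł .const q ⇒ α := by
  cases h with
  | luk h => exact (LukProv.luk h).imp_intro
  | const => exact .imp_refl _
  | book_neg q => exact (lukProv_of_isGRPLAxiom_one (.book_neg q)).imp_intro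
  | book_imp q r => exact (lukProv_of_isGRPLAxiom_one (.book_imp q r)).imp_intro
  | zero => exact lukProv_const_zero_imp α

end Bookkeeping

/-- A single line `p` of a GRPL proof from `T`, justified by premises taken from the set `S`. -/
inductive GRPLStep (T S : Set (UQ × Fml)) : UQ × Fml → Prop
  | ax {q : UQ} {α : Fml} : IsGRPLAxiom q α → GRPLStep T S (q, α)
  | hyp {p : UQ × Fml} : p ∈ T → GRPLStep T S p
  | mp {q r : UQ} {α β : Fml} : (q, α) ∈ S → (r, α ⇒ β) ∈ S → GRPLStep T S (q.lmul r, β)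
  | lift {q : UQ} {α : Fml} (r : UQ) : (q, α) ∈ S → GRPLStep T S (r.limp q, .const r ⇒ α)

theorem GRPLStep.mono {T S S' : Set (UQ × Fml)} {p : UQ × Fml} (h : GRPLStep T S p)
    (hS : S ⊆ S') : GRPLStep T S' p := by
  cases h with
  | ax h => exact .ax h
  | hyp h => exact .hyp h
  | mp h₁ h₂ => exact .mp (hS h₁) (hS h₂)
  | lift r h => exact .lift r (hS h)

theorem grplStep_iff {T S : Set (UQ × Fml)} {p : UQ × Fml} :
    GRPLStep T S p ↔ IsGRPLAxiom p.1 p.2 ∨ p ∈ T ∨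
      (∃ a ∈ S, ∃ b ∈ S, b.2 = a.2 ⇒ p.2 ∧ p.1 = a.1.lmul b.1) ∨
      ∃ a ∈ S, ∃ r : UQ, p = (r.limp a.1, .const r ⇒ a.2) := by
  constructor
  · rintro (h | h | ⟨h₁, h₂⟩ | ⟨r, h⟩)
    exacts [.inl h, .inr (.inl h), .inr (.inr (.inl ⟨_, h₁, _, h₂, rfl, rfl⟩)),
      .inr (.inr (.inr ⟨_, h, r, rfl⟩))]
  · obtain ⟨q, α⟩ := p
    rintro (h | h | ⟨⟨q₁, α₁⟩, h₁, ⟨q₂, β⟩, h₂, hβ, hq⟩ | ⟨a, h, r, ⟨⟩⟩)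
    · exact .ax h
    · exact .hyp h
    · dsimp only at hβ hq
      subst hβ hq
      exact .mp h₁ h₂
    · exact .lift r h

namespace IsGRPLProofFrom

variable {T : Set (UQ × Fml)} {L M : List (UQ × Fml)} {p : UQ × Fml}

theorem iff_forall_grplStep_take :
    IsGRPLProofFrom T L ↔ ∀ i (hi : i < L.length), GRPLStep T {a | a ∈ L.take i} L[i] := by
  have exists_mem_take (i : ℕ) (P : UQ × Fml → Prop) :
      (∃ a ∈ L.take i, P a) ↔ ∃ j : Fin L.length, j < i ∧ P (L.get j) := by
    simp only [List.mem_take_iff_getElem, lt_min_iff, Fin.exists_iff, List.get_eq_getElem]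
    grind
  simp only [IsGRPLProofFrom, grplStep_iff, Set.mem_ofPred_eq, exists_mem_take, exists_and_left,
    Fin.forall_iff, Fin.lt_def, List.get_eq_getElem]

theorem nil : IsGRPLProofFrom T [] :=
  fun i => i.elim0

theorem concat_iff :
    IsGRPLProofFrom T (L ++ [p]) ↔ IsGRPLProofFrom T L ∧ GRPLStep T {a | a ∈ L} p := by
  simp only [iff_forall_grplStep_take, List.length_append, List.length_singleton]
  constructor
  · intro h
    refine ⟨fun i hi => ?_, by simpa using h L.length (by simp)⟩
    simpa [hi, List.take_append_of_le_length hi.le] using h i (by lia)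
  · rintro ⟨hL, hp⟩ i hi
    obtain hi | rfl := Nat.lt_succ_iff_lt_or_eq.1 hi
    · simpa [hi, List.take_append_of_le_length hi.le] using hL i hi
    · simpa using hp

theorem append (hL : IsGRPLProofFrom T L) (hM : IsGRPLProofFrom T M) :
    IsGRPLProofFrom T (L ++ M) := by
  induction M using List.reverseRecOn with
  | nil => simpa using hL
  | append_singleton M p ih =>
    obtain ⟨hM, hp⟩ := concat_iff.1 hM
    rw [← List.append_assoc]
    exact concat_iff.2 ⟨ih hM, hp.mono fun _ => List.mem_append_right L⟩

theorem mem_of_forall_grplStep {C : Set (UQ × Fml)} (hC : ∀ p, GRPLStep T C p → p ∈ C)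
    (hL : IsGRPLProofFrom T L) : ∀ p ∈ L, p ∈ C := by
  induction L using List.reverseRecOn with
  | nil => simp
  | append_singleton L p ih =>
    obtain ⟨hL, hp⟩ := concat_iff.1 hL
    exact List.forall_mem_append.2 ⟨ih hL, List.forall_mem_singleton.2 (hC p (hp.mono (ih hL)))⟩

end IsGRPLProofFrom

/-- Provability in GRPL from `T` of the graded formula `p`, by a proof all of whose lines lie in
`K`. Taking for `K` the graded formulas of grade `1` gives proofs in grade `1`, and `K = univ` is
plain GRPL provability. -/
def GRPLProvWithin (K T : Set (UQ × Fml)) (p : UQ × Fml) : Prop :=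
  ∃ L : List (UQ × Fml), IsGRPLProofFrom T L ∧ L.getLast? = some p ∧ ∀ a ∈ L, a ∈ K

namespace GRPLProvWithin

variable {K T : Set (UQ × Fml)} {p : UQ × Fml}

theorem of_grplStep_of_isGRPLProofFrom {L : List (UQ × Fml)} (hL : IsGRPLProofFrom T L)
    (hLK : ∀ a ∈ L, a ∈ K) (h : GRPLStep T {a | a ∈ L} p) (hp : p ∈ K) : GRPLProvWithin K T p :=
  ⟨L ++ [p], IsGRPLProofFrom.concat_iff.2 ⟨hL, h⟩, by simp,
    List.forall_mem_append.2 ⟨hLK, List.forall_mem_singleton.2 hp⟩⟩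

theorem of_grplStep (h : GRPLStep T {a | GRPLProvWithin K T a} p) (hp : p ∈ K) :
    GRPLProvWithin K T p := by
  cases h with
  | ax h => exact of_grplStep_of_isGRPLProofFrom .nil (by simp) (.ax h) hp
  | hyp h => exact of_grplStep_of_isGRPLProofFrom .nil (by simp) (.hyp h) hp
  | mp h₁ h₂ =>
    obtain ⟨L, hL, hL_last, hLK⟩ := h₁
    obtain ⟨M, hM, hM_last, hMK⟩ := h₂
    exact of_grplStep_of_isGRPLProofFrom (hL.append hM)
      (fun a ha => (List.mem_append.1 ha).elim (hLK a) (hMK a))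
      (.mp (List.mem_append_left M (List.mem_of_getLast? hL_last))
        (List.mem_append_right L (List.mem_of_getLast? hM_last))) hp
  | lift r h =>
    obtain ⟨L, hL, hL_last, hLK⟩ := h
    exact of_grplStep_of_isGRPLProofFrom hL hLK (.lift r (List.mem_of_getLast? hL_last)) hp

end GRPLProvWithin

theorem LukProv.grplProvWithin_grade_one {T : Set (UQ × Fml)} {α : Fml}
    (h : gradeOneTheory T ⊢Ł α) : GRPLProvWithin {p | p.1 = 1} T (1, α) := by
  induction h with
  | luk h => exact .of_grplStep (.ax (.luk h)) rfl
  | hyp h => exact .of_grplStep (h.elim .ax .hyp) rfl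
  | mp _ _ ih₁ ih₂ =>
    have h_mp := GRPLProvWithin.of_grplStep (.mp ih₁ ih₂) (UQ.lmul_one 1)
    rwa [UQ.lmul_one] at h_mp

namespace GRPLProv

variable {S T : Set (UQ × Fml)} {p : UQ × Fml}

theorem of_grplStep (h : GRPLStep T {a | GRPLProv T a} p) : GRPLProv T p := by
  have within_univ (a : UQ × Fml) : GRPLProvWithin Set.univ T a ↔ GRPLProv T a := by
    simp [GRPLProvWithin, GRPLProv]
  simp only [← within_univ] at h ⊢
  exact .of_grplStep h (Set.mem_univ p)

theorem mem_of_forall_grplStep {C : Set (UQ × Fml)} (hC : ∀ a, GRPLStep T C a → a ∈ C)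
    (h : GRPLProv T p) : p ∈ C := by
  obtain ⟨L, hL, hL_last⟩ := h
  exact hL.mem_of_forall_grplStep hC p (List.mem_of_getLast? hL_last)

theorem cut (hS : ∀ a ∈ S, GRPLProv T a) (h : GRPLProv S p) : GRPLProv T p := by
  refine h.mem_of_forall_grplStep (C := {a | GRPLProv T a}) fun a ha => ?_
  cases ha with
  | ax h => exact of_grplStep (.ax h)
  | hyp h => exact hS _ h
  | mp h₁ h₂ => exact of_grplStep (.mp h₁ h₂)
  | lift r h => exact of_grplStep (.lift r h)

end GRPLProv

/-- The graded formula `⟨1, r̄ → ψ⟩` expressing the graded formula `⟨r, ψ⟩` in grade `1`. -/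
def internalize (p : UQ × Fml) : UQ × Fml :=
  (1, .const p.1 ⇒ p.2)

theorem grplProv_internalize_iff {T : Set (UQ × Fml)} {p : UQ × Fml} :
    GRPLProv T (internalize p) ↔ GRPLProv T p := by
  constructor
  · intro h
    have h_const : GRPLProv T (p.1, .const p.1) := .of_grplStep (.ax (.const p.1))
    have h_mp : GRPLProv T (p.1.lmul 1, p.2) := .of_grplStep (.mp h_const h)
    rwa [UQ.lmul_one] at h_mp
  · intro h
    have h_lift : GRPLProv T (p.1.limp p.1, .const p.1 ⇒ p.2) := .of_grplStep (.lift p.1 h)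
    rwa [UQ.limp_self] at h_lift

theorem grplProv_image_internalize_iff {T : Set (UQ × Fml)} {p : UQ × Fml} :
    GRPLProv (internalize '' T) p ↔ GRPLProv T p := by
  constructor
  · refine GRPLProv.cut ?_
    rintro _ ⟨a, ha, rfl⟩
    exact grplProv_internalize_iff.2 (.of_grplStep (.hyp ha))
  · exact GRPLProv.cut fun a ha =>
      grplProv_internalize_iff.1 (.of_grplStep (.hyp (Set.mem_image_of_mem _ ha)))

theorem GRPLProv.lukProv_const_imp {T : Set (UQ × Fml)} {p : UQ × Fml} (h : GRPLProv T p) :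
    gradeOneTheory (internalize '' T) ⊢Ł .const p.1 ⇒ p.2 := by
  refine h.mem_of_forall_grplStep
    (C := {a | gradeOneTheory (internalize '' T) ⊢Ł .const a.1 ⇒ a.2}) fun a ha => ?_
  cases ha with
  | ax h => exact lukProv_const_imp_of_isGRPLAxiom h
  | hyp h => exact .hyp (.inr (Set.mem_image_of_mem internalize h))
  | mp h₁ h₂ => exact (lukProv_const_lmul_imp _ _).imp_trans (.odot_imp_of_imp h₁ h₂)
  | lift r h => exact (lukProv_const_limp_imp r _).imp_trans (.imp_mono_right h)

/-- GRPL embeds in GRPL via grade-1 formulas: `T ⊢_GRPL ⟨q,φ⟩` iff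
`{ ⟨1, r̄→ψ⟩ : ⟨r,ψ⟩ ∈ T } ⊢_GRPL ⟨1, q̄→φ⟩`; moreover the proof asserted on the right
can be chosen so that every graded formula occurring in it has grade `1`. -/
theorem grpl_embeds_in_grpl (T : Set (UQ × Fml)) (q : UQ) (φ : Fml) :
    (GRPLProv T (q, φ) ↔
      GRPLProv ((fun p : UQ × Fml => ((1 : UQ), (Fml.const p.1).imp p.2)) '' T)
        (1, (Fml.const q).imp φ)) ∧
    (GRPLProv T (q, φ) →
      ∃ P : List (UQ × Fml),
        IsGRPLProofFrom ((fun p : UQ × Fml => ((1 : UQ), (Fml.const p.1).imp p.2)) '' T) P ∧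
        P.getLast? = some (1, (Fml.const q).imp φ) ∧ ∀ p ∈ P, p.1 = (1 : UQ)) :=
  ⟨grplProv_internalize_iff.symm.trans grplProv_image_internalize_iff.symm,
    fun h => h.lukProv_const_imp.grplProvWithin_grade_one⟩
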